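/- arXiv:1903.00579 — 8 statements merged into one kernel-verified Lean document; each statement's English description precedes it below -/
import Mathlib

section
/- Let X, Y, Z be linear orders. If G is a connection between X and Y and H is a connection between Y and Z, then the relation K = {(x, z) ∈ X × Z | there exists y' ∈ Y such that G(x, y) holds for all y ∈ Y with y' ≤ y, and H(y', z) holds} is a connection between X and Z. -/
/-- `∃^cf x, A x`: for every `x'` there exists `x ≥ x'` with `A x`. -/
def CofExists {X : Type*} [LinearOrder X] (A : X → Prop) : Prop :=
  ∀ x' : X, ∃ x : X, x' ≤ x ∧ A x

/-- `∀^cf x, A x`: there exists `x'` such that `A x` holds for all `x ≥ x'`. -/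
def CofForall {X : Type*} [LinearOrder X] (A : X → Prop) : Prop :=
  ∃ x' : X, ∀ x : X, x' ≤ x → A x

/-- `G ⊆ X × Y` is a connection between `X` and `Y` if
`∃^cf x, ∀^cf y, G x y` and `∃^cf y, ∀^cf x, ¬ G x y`. -/
def IsConnection {X Y : Type*} [LinearOrder X] [LinearOrder Y] (G : X → Y → Prop) : Prop :=
  CofExists (fun x => CofForall (fun y => G x y)) ∧
  CofExists (fun y => CofForall (fun x => ¬ G x y))

/-- If `G` connects `X` and `Y` and `H` connects `Y` and `Z`, then
`K = {(x,z) | ∃ y', (∀ y ≥ y', G x y) ∧ H y' z}` connects `X` and `Z`. -/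
theorem isConnection_comp {X Y Z : Type*} [LinearOrder X] [LinearOrder Y] [LinearOrder Z]
    (G : X → Y → Prop) (H : Y → Z → Prop)
    (hG : IsConnection G) (hH : IsConnection H) :
    IsConnection (fun (x : X) (z : Z) =>
      ∃ y' : Y, (∀ y : Y, y' ≤ y → G x y) ∧ H y' z) := by
  constructor
  · intro x'
    obtain ⟨x, hx, y0, hy0⟩ := hG.1 x'
    obtain ⟨y1, hy1, z0, hz0⟩ := hH.1 y0
    exact ⟨x, hx, z0, fun z hz => ⟨y1, fun y hy => hy0 y (hy1.trans hy), hz0 z hz⟩⟩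
  · intro z'
    obtain ⟨z, hz, y0, hy0⟩ := hH.2 z'
    obtain ⟨y1, hy1, x0, hx0⟩ := hG.2 y0
    refine ⟨z, hz, x0, ?_⟩
    rintro x hx ⟨y', hG', hH'⟩
    rcases le_total y0 y' with h | h
    · exact hy0 y' h hH'
    · exact hx0 x hx (hG' y1 (h.trans hy1))
end

section
/- Let X and Y be linear orders connected by a relation G. Then the relation G' = {(x, y) ∈ X × Y | there exists x' ∈ X with x ≤ x' such that G(x', y') holds for all y' ∈ Y with y ≤ y'} is also a connection between X and Y; moreover G' is antitone in the first argument (if x₁ ≤ x₂ and G'(x₂, y) then G'(x₁, y)) and monotone in the second argument (if y₁ ≤ y₂ and G'(x, y₁) then G'(x, y₂)). -/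
/-- If `G` connects `X` and `Y`, then
`G' = {(x,y) | ∃ x' ≥ x, ∀ y' ≥ y, G x' y'}` also connects `X` and `Y`;
moreover `G'` is antitone in the first argument and monotone in the second. -/
theorem isConnection_antitone_monotone {X Y : Type*} [LinearOrder X] [LinearOrder Y]
    (G : X → Y → Prop) (hG : IsConnection G) :
    IsConnection (fun (x : X) (y : Y) => ∃ x' : X, x ≤ x' ∧ ∀ y' : Y, y ≤ y' → G x' y') ∧
    (∀ x₁ x₂ : X, ∀ y : Y, x₁ ≤ x₂ →
      (∃ x' : X, x₂ ≤ x' ∧ ∀ y' : Y, y ≤ y' → G x' y') →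
      (∃ x' : X, x₁ ≤ x' ∧ ∀ y' : Y, y ≤ y' → G x' y')) ∧
    (∀ x : X, ∀ y₁ y₂ : Y, y₁ ≤ y₂ →
      (∃ x' : X, x ≤ x' ∧ ∀ y' : Y, y₁ ≤ y' → G x' y') →
      (∃ x' : X, x ≤ x' ∧ ∀ y' : Y, y₂ ≤ y' → G x' y')) := by
  obtain ⟨h1, h2⟩ := hG
  refine ⟨⟨?_, ?_⟩, ?_, ?_⟩
  · intro x₀
    obtain ⟨x, hx, y₀, hy⟩ := h1 x₀
    exact ⟨x, hx, y₀, fun y hyy => ⟨x, le_rfl, fun y' h => hy y' (hyy.trans h)⟩⟩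
  · intro y₀
    obtain ⟨y, hy, x₀, hx⟩ := h2 y₀
    refine ⟨y, hy, x₀, ?_⟩
    rintro x hxx ⟨x', hx', h⟩
    exact hx x' (hxx.trans hx') (h y le_rfl)
  · rintro x₁ x₂ y h ⟨x', hx', hG⟩
    exact ⟨x', h.trans hx', hG⟩
  · rintro x y₁ y₂ h ⟨x', hx', hG⟩
    exact ⟨x', hx', fun y' hy => hG y' (h.trans hy)⟩
end

section
/- Let X and Y be linear orders without greatest element. If X and Y have the same cofinality, then there exists a connection between X and Y. -/
/-- The cofinality of a linear order: the least cardinality of a subset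
that is unbounded above. -/
noncomputable def cofinality (X : Type*) [LinearOrder X] : Cardinal :=
  sInf {c : Cardinal | ∃ S : Set X, (∀ b : X, ∃ y ∈ S, ¬ y ≤ b) ∧ Cardinal.mk S = c}

theorem bounded_of_lt_cof {I : Type u} {Y : Type v} [LinearOrder Y] (A : Set I) (g : I → Y)
    (h : Cardinal.lift.{v} (Cardinal.mk A) < Cardinal.lift.{u} (cofinality Y)) :
    ∃ b, ∀ a ∈ A, g a ≤ b := by
  by_contra hc
  push Not at hc
  have h1 : cofinality Y ≤ Cardinal.mk (g '' A) := by
    refine csInf_le' ⟨g '' A, fun b => ?_, rfl⟩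
    obtain ⟨a, ha, hb⟩ := hc b
    exact ⟨g a, ⟨a, ha, rfl⟩, not_le.2 hb⟩
  have h2 := Cardinal.mk_image_le_lift (f := g) (s := A)
  exact absurd (lt_of_lt_of_le h ((Cardinal.lift_le.2 h1).trans h2)) (lt_irrefl _)

theorem exists_cof_fun {I : Type u} {Y : Type v} [LinearOrder Y]
    (hY : ¬ ∃ m : Y, ∀ y : Y, y ≤ m)
    (h : Cardinal.lift.{v} (Cardinal.mk I) = Cardinal.lift.{u} (cofinality Y)) :
    ∃ g : I → Y, ∀ y, ∃ i, y < g i := by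
  have hne : {c : Cardinal | ∃ S : Set Y, (∀ b : Y, ∃ y ∈ S, ¬ y ≤ b) ∧
      Cardinal.mk S = c}.Nonempty := by
    refine ⟨_, Set.univ, fun b => ?_, rfl⟩
    push Not at hY
    obtain ⟨x, hx⟩ := hY b
    exact ⟨x, trivial, not_le.2 hx⟩
  obtain ⟨S, hS, hc⟩ := csInf_mem hne
  change _ = cofinality Y at hc
  rw [← hc] at h
  obtain ⟨e⟩ := Cardinal.lift_mk_eq'.1 h
  refine ⟨fun i => e i, fun y => ?_⟩
  obtain ⟨z, hz, hy⟩ := hS y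
  exact ⟨e.symm ⟨z, hz⟩, by simpa using hy⟩

/-- Two linear orders without greatest element with the same cofinality are connected. -/
theorem exists_connection_of_cofinality_eq {X : Type u} {Y : Type v}
    [LinearOrder X] [LinearOrder Y]
    (hX : ¬ ∃ m : X, ∀ x : X, x ≤ m) (hY : ¬ ∃ m : Y, ∀ y : Y, y ≤ m)
    (hcof : Cardinal.lift.{v} (cofinality X) = Cardinal.lift.{u} (cofinality Y)) :
    ∃ G : X → Y → Prop, IsConnection G := by
  let I := (cofinality X).ord.ToType
  have hI : Cardinal.mk I = cofinality X := Cardinal.mk_ord_toType _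
  have hlt (i : I) : Cardinal.mk (Set.Iio i) < cofinality X := Cardinal.mk_Iio_ord_toType i
  obtain ⟨f, hf⟩ := exists_cof_fun (I := I) hX (by rw [hI])
  obtain ⟨g, hg⟩ := exists_cof_fun (I := I) hY (by rw [hI, hcof])
  have bf (i : I) := bounded_of_lt_cof (Set.Iio i) f (Cardinal.lift_lt.2 (hlt i))
  have bg (i : I) := bounded_of_lt_cof (Set.Iio i) g
    (by rw [← hcof]; exact Cardinal.lift_lt.2 (hlt i))
  refine ⟨fun x y => ∃ i, x < f i ∧ ∀ j < i, g j ≤ y, fun x => ⟨x, le_rfl, ?_⟩,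
    fun y => ⟨y, le_rfl, ?_⟩⟩
  · obtain ⟨i, hi⟩ := hf x
    obtain ⟨b, hb⟩ := bg i
    exact ⟨b, fun y hy => ⟨i, hi, fun j hj => (hb j hj).trans hy⟩⟩
  · obtain ⟨k, hk⟩ := hg y
    obtain ⟨b, hb⟩ := bf k
    refine ⟨max b (f k), ?_⟩
    rintro x hx ⟨i, hi, hj⟩
    rcases lt_trichotomy i k with h | h | h
    · exact absurd (hb i h) (not_le.2 (lt_of_le_of_lt ((le_max_left _ _).trans hx) hi))
    · subst h
      exact absurd ((le_max_right _ _).trans hx) (not_le.2 hi)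
    · exact absurd (hj k h) (not_le.2 hk)
end

section
/- Let X and Y be linear orders without greatest element. If there exists a connection between X and Y, then X and Y have the same cofinality. -/
/-- One inequality: a connection bounds the cofinality of `X` by that of `Y`. -/
theorem cofinality_le_aux {X : Type u} {Y : Type v}
    [LinearOrder X] [LinearOrder Y] (hY : ¬ ∃ m : Y, ∀ y : Y, y ≤ m)
    (G : X → Y → Prop) (hG : IsConnection G) :
    Cardinal.lift.{v} (cofinality X) ≤ Cardinal.lift.{u} (cofinality Y) := by
  obtain ⟨h1, h2⟩ := hG
  have hne : {c : Cardinal | ∃ S : Set Y, (∀ b : Y, ∃ y ∈ S, ¬ y ≤ b) ∧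
      Cardinal.mk S = c}.Nonempty := by
    refine ⟨_, Set.univ, fun b => ?_, rfl⟩
    by_contra hb
    push Not at hb
    exact hY ⟨b, fun y => hb y (Set.mem_univ y)⟩
  obtain ⟨S, hS, hc⟩ := csInf_mem hne
  have hc' : cofinality Y = Cardinal.mk S := hc.symm
  choose f hf g hg using h2
  have hT : cofinality X ≤ Cardinal.mk (Set.range fun s : S => g s.1) := by
    refine csInf_le' ⟨_, fun b => ?_, rfl⟩
    by_contra hb
    push Not at hb
    obtain ⟨x, hbx, y0, hy0⟩ := h1 b
    obtain ⟨s, hs, hsy⟩ := hS y0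
    have hle : g s ≤ b := hb _ ⟨⟨s, hs⟩, rfl⟩
    exact hg s x (hle.trans hbx) (hy0 _ ((not_le.mp hsy).le.trans (hf s)))
  rw [hc']
  exact (Cardinal.lift_le.mpr hT).trans Cardinal.mk_range_le_lift

/-- If two linear orders without greatest element are connected,
then they have the same cofinality. -/
theorem cofinality_eq_of_connection {X : Type u} {Y : Type v}
    [LinearOrder X] [LinearOrder Y]
    (hX : ¬ ∃ m : X, ∀ x : X, x ≤ m) (hY : ¬ ∃ m : Y, ∀ y : Y, y ≤ m)
    (hG : ∃ G : X → Y → Prop, IsConnection G) :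
    Cardinal.lift.{v} (cofinality X) = Cardinal.lift.{u} (cofinality Y) := by
  obtain ⟨G, hG⟩ := hG
  refine le_antisymm (cofinality_le_aux hY G hG)
    (cofinality_le_aux hX (fun y x => ¬ G x y) ⟨hG.2, ?_⟩)
  simpa only [not_not] using hG.1
end

section
/- Let X and Y be linear orders without greatest element and let κ be an ordinal. Suppose (x_α | α < κ) is a strictly increasing sequence in X whose range is unbounded above in X, and (y_α | α < κ) is a strictly increasing sequence in Y whose range is unbounded above in Y. Then the relation G = {(x, y) ∈ X × Y | there exists α < κ with x ≤ x_α and y_α ≤ y} is a connection between X and Y. -/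
/-- If `(x_α | α < κ)` and `(y_α | α < κ)` are strictly increasing sequences, unbounded
above in `X` and `Y` respectively, where `X` and `Y` have no greatest element, then
`G = {(x, y) | ∃ α < κ, x ≤ x_α ∧ y_α ≤ y}` is a connection between `X` and `Y`. -/
theorem isConnection_of_unbounded_sequences {X Y : Type*} [LinearOrder X] [LinearOrder Y]
    (hX : ¬ ∃ m : X, ∀ x : X, x ≤ m) (hY : ¬ ∃ m : Y, ∀ y : Y, y ≤ m)
    (κ : Ordinal) (xseq : Set.Iio κ → X) (yseq : Set.Iio κ → Y)
    (hxmono : StrictMono xseq) (hymono : StrictMono yseq)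
    (hxunb : ∀ b : X, ∃ α : Set.Iio κ, ¬ xseq α ≤ b)
    (hyunb : ∀ b : Y, ∃ α : Set.Iio κ, ¬ yseq α ≤ b) :
    IsConnection (fun (x : X) (y : Y) => ∃ α : Set.Iio κ, x ≤ xseq α ∧ yseq α ≤ y) := by
  constructor
  · intro x'
    obtain ⟨α, hα⟩ := hxunb x'
    exact ⟨x', le_rfl, yseq α, fun y hy => ⟨α, (not_le.mp hα).le, hy⟩⟩
  · intro y'
    obtain ⟨α, hα⟩ := hyunb y'
    refine ⟨y', le_rfl, xseq α, ?_⟩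
    rintro x hx ⟨β, h1, h2⟩
    exact hα ((hymono.monotone (hxmono.le_iff_le.mp (hx.trans h1))).trans h2)
end

section
/- Let X and Y be linear orders and let G be a connection between X and Y. Suppose (x_α | α < κ) is a family of elements of X whose range is unbounded above in X, and for each α < κ the element y_α ∈ Y satisfies: G(x_α, y) holds for every y ∈ Y with y_α ≤ y. Then the set {y_α | α < κ} is unbounded above in Y. -/
/-- If `G` connects `X` and `Y`, `(x_α | α < κ)` has range unbounded above in `X`, and
for each `α` the element `y_α` satisfies `∀ y ≥ y_α, G (x_α) y`, then the `y_α` are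
unbounded above in `Y`. -/
theorem unbounded_of_connection {X Y : Type*} [LinearOrder X] [LinearOrder Y]
    (G : X → Y → Prop) (hG : IsConnection G)
    (κ : Ordinal) (xseq : Set.Iio κ → X) (yseq : Set.Iio κ → Y)
    (hxunb : ∀ b : X, ∃ α : Set.Iio κ, ¬ xseq α ≤ b)
    (hy : ∀ α : Set.Iio κ, ∀ y : Y, yseq α ≤ y → G (xseq α) y) :
    ∀ b : Y, ∃ α : Set.Iio κ, ¬ yseq α ≤ b := by
  intro b
  by_contra! h
  obtain ⟨y, hby, x', hx'⟩ := hG.2 b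
  obtain ⟨α, hα⟩ := hxunb x'
  exact hx' (xseq α) (le_of_not_ge hα) (hy α y ((h α).trans hby))
end

section
/- Let M be a structure in a first-order language L, and let <_φ and <_ψ be two linear orderings of the universe of M, each without greatest element, that are definable in M with parameters from M. Assume that <_φ and <_ψ are not definably connected, i.e., no relation G ⊆ M × M definable in M with parameters from M is a connection between (M, <_φ) and (M, <_ψ). Let c be a new constant symbol and let T' be the theory in the language L(M) ∪ {c} consisting of the elementary diagram of M (the set of all L(M)-sentences true in M with each element of M named by a constant) together with the sentences m <_φ c for every m ∈ M. Then T' does not isolate the partial type Σ(y) = {n <_ψ y | n ∈ M}; that is, there is no L(M) ∪ {c}-formula γ(y) in one free variable such that T' ∪ {∃y γ(y)} is satisfiable and, for every n ∈ M, every model of T' satisfies ∀y (γ(y) → n <_ψ y). -/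
open FirstOrder FirstOrder.Language

universe u

/-- A connection between `(X, <ₓ)` and `(Y, <ᵧ)`, for strict linear orders given as relations:
`∃^cf x, ∀^cf y, G x y` and `∃^cf y, ∀^cf x, ¬ G x y`, where `a ≤ b` abbreviates
`a < b ∨ a = b`. -/
def IsConnectionRel {X Y : Type*} (ltx : X → X → Prop) (lty : Y → Y → Prop)
    (G : X → Y → Prop) : Prop :=
  (∀ x₀ : X, ∃ x : X, (ltx x₀ x ∨ x₀ = x) ∧
    ∃ y₀ : Y, ∀ y : Y, (lty y₀ y ∨ y₀ = y) → G x y) ∧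
  (∀ y₀ : Y, ∃ y : Y, (lty y₀ y ∨ y₀ = y) ∧
    ∃ x₀ : X, ∀ x : X, (ltx x₀ x ∨ x₀ = x) → ¬ G x y)

/-- The theory `T' = Th(M, m)_{m ∈ M} ∪ {m <_φ c | m ∈ M}` in the language `L(M) ∪ {c}`,
where `c` is a new constant symbol, `Th(M, m)_{m ∈ M}` is the elementary diagram of `M`, and
`<_φ` is defined by the `L(M)`-formula `φfml`. -/
def Tprime (L : FirstOrder.Language.{u, u}) (M : Type u) [L.Structure M]
    (φfml : L[[M]].Formula (Fin 2)) : (L[[M]][[Unit]]).Theory :=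
  (lhomWithConstants (L[[M]]) Unit).onTheory (L.elementaryDiagram M) ∪
    Set.range (fun m : M =>
      ((lhomWithConstants (L[[M]]) Unit).onFormula φfml).subst
        ![(lhomWithConstants (L[[M]]) Unit).onTerm (Constants.term (L.con m)),
          Constants.term ((L[[M]]).con ())])

/-- A copy of `M` in which the new constant is interpreted by `x`. -/
def PtFam (M : Type u) (_x : M) : Type u := M

instance PtFam.instStr {K : FirstOrder.Language.{u, u}} {M : Type u} [h : K.Structure M] (x : M) :
    K.Structure (PtFam M x) := h

instance PtFam.instConst {M : Type u} (x : M) : (constantsOn Unit).Structure (PtFam M x) :=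
  constantsOn.structure (fun _ => (x : M))

instance PtFam.instNonempty {M : Type u} (x : M) : Nonempty (PtFam M x) := ⟨(x : M)⟩

/-- `γ(c, y)` as a relation on `M`. -/
def relOf {K : FirstOrder.Language.{u, u}} (γ : (K[[Unit]]).Formula (Fin 1)) :
    K.Formula (Unit ⊕ Fin 1) := BoundedFormula.constantsVarsEquiv γ

theorem relOf_realize {K : FirstOrder.Language.{u, u}} (γ : (K[[Unit]]).Formula (Fin 1))
    {N : Type u} [K.Structure N] [(K[[Unit]]).Structure N]
    [(lhomWithConstants K Unit).IsExpansionOn N] (b : N) :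
    (relOf γ).Realize (Sum.elim (fun _ => ((K.con () : (K[[Unit]]).Constants) : N)) (fun _ => b)) ↔
      γ.Realize (fun _ => b) :=
  BoundedFormula.realize_constantsVarsEquiv (φ := γ)

theorem PtFam.realize {K : FirstOrder.Language.{u, u}} (γ : (K[[Unit]]).Formula (Fin 1))
    {M : Type u} [K.Structure M] (x y : M) :
    γ.Realize (M := PtFam M x) (fun _ => y) ↔
    (relOf γ).Realize (M := M) (Sum.elim (fun _ => x) (fun _ => y)) := by
  exact (relOf_realize (N := PtFam M x) γ y).symm

/-- The satisfiability direction. -/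
theorem cofinal_of_model {L : FirstOrder.Language.{u, u}} {M : Type u}
    [L.Structure M] (φfml : L[[M]].Formula (Fin 2)) (γ : (L[[M]][[Unit]]).Formula (Fin 1))
    (N : Theory.ModelType.{u, u, u} (Tprime L M φfml)) (b : N) (hb : γ.Realize (fun _ => b))
    (m : M) : ∃ x y : M, φfml.Realize ![m, x] ∧
      (relOf γ).Realize (Sum.elim (fun _ => x) (fun _ => y)) := by
  letI : L[[M]].Structure N := (lhomWithConstants (L[[M]]) Unit).reduct N
  let χ : L[[M]].Formula (Empty ⊕ Fin 2) :=
    (φfml.subst ![Constants.term (L.con m), Term.var (Sum.inr 0)]) ⊓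
      (relOf γ).relabel (Sum.elim (fun _ => Sum.inr 0) (fun _ => Sum.inr 1))
  let σ : L[[M]].Sentence := χ.iExs (Fin 2)
  have hN := N.is_model
  replace hN := Theory.model_union_iff.1 hN
  rw [LHom.onTheory_model] at hN
  have key : (N : Type u) ⊨ σ := by
    have h2 := hN.2.realize_of_mem _ ⟨m, rfl⟩
    refine (Formula.realize_iExs (φ := χ)).2 ⟨![((L[[M]].con () : (L[[M]][[Unit]]).Constants) : N), b], ?_⟩
    refine Formula.realize_inf.2 ⟨?_, ?_⟩
    · have h3 := BoundedFormula.realize_subst.1 h2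
      refine BoundedFormula.realize_subst.2 ?_
      erw [LHom.realize_onBoundedFormula] at h3
      convert h3 using 1
      funext i
      fin_cases i
      · simp
      · simp
    · rw [Formula.realize_relabel]
      refine (iff_of_eq ?_).mp ((relOf_realize γ b).2 hb)
      congr 1
      funext i
      rcases i with i | i <;> rfl
  have hM : M ⊨ σ := by
    haveI := hN.1
    exact (realize_iff_of_model_completeTheory M N σ).1 key
  obtain ⟨i, hi⟩ := (Formula.realize_iExs (φ := χ)).1 hM
  obtain ⟨h1, h2⟩ := Formula.realize_inf.1 hi
  refine ⟨i 0, i 1, ?_, ?_⟩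
  · refine (iff_of_eq ?_).mp (BoundedFormula.realize_subst.1 h1)
    unfold Formula.Realize
    congr 1
    funext j
    fin_cases j
    · rfl
    · rfl
  · rw [Formula.realize_relabel] at h2
    refine (iff_of_eq ?_).mp h2
    congr 1
    funext j
    rcases j with j | j <;> rfl

/-- The theorem of Łoś, packaged. -/
theorem los_pack {K : FirstOrder.Language.{u, u}} {α : Type u} (U : Ultrafilter α)
    (F : α → Type u) [∀ a, K.Structure (F a)] [∀ a, Nonempty (F a)] :
    ∃ (P : Type u) (_ : K.Structure P) (_ : Nonempty P) (q : (∀ a, F a) → P),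
      (∀ {β : Type} (φ : K.Formula β) (x : β → ∀ a, F a),
        φ.Realize (fun i => q (x i)) ↔ ∀ᶠ a in (U : Filter α), φ.Realize (fun i => x i a)) ∧
      (∀ σ : K.Sentence, P ⊨ σ ↔ ∀ᶠ a in (U : Filter α), F a ⊨ σ) ∧
      (∀ {β : Type} (t : K.Term β) (x : β → ∀ a, F a),
        t.realize (fun i => q (x i)) = q (fun a => t.realize (fun i => x i a))) :=
  ⟨(U : Filter α).Product F, inferInstance, inferInstance, fun f => Quotient.mk ((U : Filter α).productSetoid F) f,
    fun φ x => Ultraproduct.realize_formula_cast φ x,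
    fun σ => Ultraproduct.sentence_realize σ,
    fun t x => Ultraproduct.term_realize_cast x t⟩

/-- The compactness direction, by ultraproducts. -/
theorem bound_of_isolates {L : FirstOrder.Language.{u, u}} {M : Type u} [Nonempty M]
    [L.Structure M] (ltφ : M → M → Prop)
    (φfml ψfml : L[[M]].Formula (Fin 2))
    (hφdef : ∀ a b : M, ltφ a b ↔ φfml.Realize ![a, b])
    (hφlin : IsStrictTotalOrder M ltφ)
    (hφnomax : ∀ a : M, ∃ b : M, ltφ a b)
    (γ : (L[[M]][[Unit]]).Formula (Fin 1)) (n : M)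
    (hγ : ∀ (N : Theory.ModelType.{u, u, u} (Tprime L M φfml)) (b : N),
        γ.Realize (fun _ => b) →
        ((lhomWithConstants (L[[M]]) Unit).onFormula ψfml).Realize
          ![Term.realize (fun x : Empty => x.elim)
              ((lhomWithConstants (L[[M]]) Unit).onTerm (Constants.term (L.con n))), b]) :
    ∃ m : M, ∀ x y : M, ltφ m x →
      (relOf γ).Realize (Sum.elim (fun _ => x) (fun _ => y)) → ψfml.Realize ![n, y] := by
  classical
  by_contra hcon
  push Not at hcon
  choose x y hx hxy hn using hcon
  obtain ⟨U, hU⟩ : ∃ U : Ultrafilter M, ∀ m₀ : M, ∀ᶠ m in (U : Filter M), ltφ m₀ m := by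
    letI : LinearOrder M := linearOrderOfSTO ltφ
    haveI : NoMaxOrder M := ⟨hφnomax⟩
    exact ⟨Ultrafilter.of Filter.atTop, fun m₀ =>
      (Filter.eventually_gt_atTop m₀).filter_mono (Ultrafilter.of_le _)⟩
  obtain ⟨P, instP, neP, q, hf, hs, ht⟩ := los_pack (K := L[[M]][[Unit]]) U (fun m => PtFam M (x m))
  have hmodel : P ⊨ Tprime L M φfml := by
    refine ⟨fun σ hσ => ?_⟩
    refine (hs σ).2 ?_
    rcases hσ with ⟨τ, hτ, rfl⟩ | ⟨m₀, rfl⟩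
    · refine Filter.Eventually.of_forall fun m => ?_
      exact (LHom.realize_onSentence (M := PtFam M (x m)) (lhomWithConstants (L[[M]]) Unit) τ).2 hτ
    · filter_upwards [hU m₀] with m hm
      refine BoundedFormula.realize_subst.2 ?_
      refine (LHom.realize_onFormula (M := PtFam M (x m)) (lhomWithConstants (L[[M]]) Unit) φfml).2 ?_
      refine (iff_of_eq ?_).mp ((hφdef m₀ (x m)).1 (hφlin.toIsTrans.trans _ _ _ hm (hx m)))
      show φfml.Realize (M := M) _ = φfml.Realize (M := M) _
      congr 1
      funext i
      fin_cases i
      · exact (LHom.realize_onTerm (M := PtFam M (x m)) (lhomWithConstants (L[[M]]) Unit) (Constants.term (L.con m₀)) _).symm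
      · rfl
  have h1 := hγ (Theory.ModelType.of _ P) (q (fun m => (y m : M)))
    ((hf γ (fun _ m => (y m : M))).2
      (Filter.Eventually.of_forall fun m => (PtFam.realize γ (x m) (y m)).2 (hxy m)))
  have h2 : ((lhomWithConstants (L[[M]]) Unit).onFormula ψfml).Realize (M := P)
      (fun i => q (fun m => (![n, y m] i : M))) := by
    refine (iff_of_eq ?_).mp h1
    show Formula.Realize (M := P) _ _ = _
    congr 1
    funext i
    fin_cases i
    · refine (congrArg (fun v => Term.realize (M := P) v _) (Subsingleton.elim _ _)).trans
        ((ht ((lhomWithConstants (L[[M]]) Unit).onTerm (Constants.term (L.con n)))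
          (fun e : Empty => e.elim)).trans ?_)
      refine congrArg q ?_
      funext m
      exact (LHom.realize_onTerm (M := PtFam M (x m)) (lhomWithConstants (L[[M]]) Unit)
        (Constants.term (L.con n)) _)
    · rfl
  have h3 := (hf _ (fun i m => (![n, y m] i : M))).1 h2
  obtain ⟨m, hm⟩ := h3.exists
  exact hn m ((LHom.realize_onFormula (M := PtFam M (x m)) (lhomWithConstants (L[[M]]) Unit) ψfml).1 hm)

/-- Lemma 3.1: if the definable linear orderings `<_φ` and `<_ψ` of `M`, both without
greatest element, are not definably connected, then the theory
`T' = Th(M, m)_{m ∈ M} ∪ {m <_φ c | m ∈ M}` does not isolate the partial type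
`Σ(y) = {n <_ψ y | n ∈ M}`: there is no formula `γ(y)` of `L(M) ∪ {c}` in one free
variable such that `T' ∪ {∃y γ(y)}` is satisfiable and every model of `T'` satisfies
`∀y (γ(y) → n <_ψ y)` for each `n ∈ M`. -/
theorem Tprime_does_not_isolate {L : FirstOrder.Language.{u, u}} {M : Type u} [Nonempty M]
    [L.Structure M] (ltφ ltψ : M → M → Prop)
    (φfml ψfml : L[[M]].Formula (Fin 2))
    (hφdef : ∀ a b : M, ltφ a b ↔ φfml.Realize ![a, b])
    (hψdef : ∀ a b : M, ltψ a b ↔ ψfml.Realize ![a, b])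
    (hφlin : IsStrictTotalOrder M ltφ) (hψlin : IsStrictTotalOrder M ltψ)
    (hφnomax : ∀ a : M, ∃ b : M, ltφ a b) (hψnomax : ∀ a : M, ∃ b : M, ltψ a b)
    (hnotcon : ∀ G : M → M → Prop,
      (∃ χ : L[[M]].Formula (Fin 2), ∀ a b : M, G a b ↔ χ.Realize ![a, b]) →
      ¬ IsConnectionRel ltφ ltψ G) :
    ¬ ∃ γ : (L[[M]][[Unit]]).Formula (Fin 1),
      (∃ (N : Theory.ModelType.{u, u, u} (Tprime L M φfml)) (b : N), γ.Realize (fun _ => b)) ∧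
      (∀ (N : Theory.ModelType.{u, u, u} (Tprime L M φfml)) (n : M) (b : N),
        γ.Realize (fun _ => b) →
        ((lhomWithConstants (L[[M]]) Unit).onFormula ψfml).Realize
          ![Term.realize (fun x : Empty => x.elim)
              ((lhomWithConstants (L[[M]]) Unit).onTerm (Constants.term (L.con n))), b]) := by
  rintro ⟨γ, ⟨N, b, hb⟩, hγ⟩
  let R : M → M → Prop := fun x y => (relOf γ).Realize (Sum.elim (fun _ => x) (fun _ => y))
  let χ : L[[M]].Formula (Fin 2 ⊕ Fin 1) :=
    ((Term.var (Sum.inr 0)).equal (Term.var (Sum.inl 1)) ⊔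
      ψfml.relabel ![Sum.inr 0, Sum.inl 1]) ⊓
      (relOf γ).relabel (Sum.elim (fun _ => Sum.inl 0) (fun _ => Sum.inr 0))
  have htr := hψlin.toIsTrans.trans
  have hirr := hψlin.toIrrefl.irrefl
  refine hnotcon (fun x y => ∃ z, (z = y ∨ ltψ z y) ∧ R x z) ⟨χ.iExs (Fin 1), ?_⟩ ⟨?_, ?_⟩
  · intro a b
    rw [Formula.realize_iExs]
    have hχ : ∀ i : Fin 1 → M, χ.Realize (Sum.elim ![a, b] i) ↔
        ((i 0 = b ∨ ltψ (i 0) b) ∧ R a (i 0)) := by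
      intro i
      have e1 : (Sum.elim ![a, b] i ∘ ![Sum.inr 0, Sum.inl 1] : Fin 2 → M) = ![i 0, b] := by
        funext j; fin_cases j <;> rfl
      have e2 : (Sum.elim ![a, b] i ∘ (Sum.elim (fun _ => Sum.inl 0) (fun _ => Sum.inr 0)) :
          Unit ⊕ Fin 1 → M) = Sum.elim (fun _ => a) (fun _ => i 0) := by
        funext j; rcases j with j | j <;> rfl
      simp only [χ, Formula.realize_inf, Formula.realize_sup, Formula.realize_relabel, e1, e2,
        Formula.realize_equal, ← hψdef, R]
      rfl
    constructor
    · rintro ⟨z, hz⟩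
      exact ⟨fun _ => z, (hχ _).2 hz⟩
    · rintro ⟨i, hi⟩
      exact ⟨i 0, (hχ i).1 hi⟩
  · intro x₀
    obtain ⟨x, y, h1, h2⟩ := cofinal_of_model φfml γ N b hb x₀
    exact ⟨x, Or.inl ((hφdef _ _).2 h1), y, fun y' hy' => ⟨y, hy'.symm, h2⟩⟩
  · intro y₀
    obtain ⟨m, hm⟩ := bound_of_isolates ltφ φfml ψfml hφdef hφlin hφnomax γ y₀
      (fun N b => hγ N y₀ b)
    obtain ⟨m', hm'⟩ := hφnomax m
    refine ⟨y₀, Or.inr rfl, m', ?_⟩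
    rintro x hx ⟨z, hz, hR⟩
    have hmx : ltφ m x := by
      rcases hx with hx | rfl
      · exact hφlin.toIsTrans.trans _ _ _ hm' hx
      · exact hm'
    have h := (hψdef _ _).2 (hm x z hmx hR)
    rcases hz with rfl | hz
    · exact hirr _ h
    · exact hirr _ (htr _ _ _ h hz)
end

section
/- Let κ be a regular cardinal, let L be a first-order language of cardinality at most κ, and let M be an L-structure of cardinality at most κ. Let <_φ be a linear ordering of the universe of M without greatest element that is definable in M with parameters from M. Then there exists a proper elementary extension N of M such that: (1) M is not <_φ-cofinal in N, i.e., there is b ∈ N with a <_φ^N b for all a ∈ M, where <_φ^N is the relation defined in N by the same formula and parameters as <_φ; and (2) for every linear ordering <_ψ of the universe of M that is definable in M with parameters from M, has cofinality κ, and is not definably connected to <_φ (i.e., no relation definable in M with parameters from M is a connection between (M, <_φ) and (M, <_ψ)), the set M is <_ψ-cofinal in N, i.e., for every b ∈ N there is a ∈ M with b ≤_ψ^N a, where <_ψ^N is the relation defined in N by the same formula and parameters as <_ψ. -/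
open FirstOrder FirstOrder.Language

universe u

/-- A binary relation on `M` is definable (with parameters from `M`) if it is the set of
realizations in `M` of a first-order `L`-formula with parameters from `M`. -/
def DefinableRel (L : FirstOrder.Language.{u, u}) (M : Type u) [L.Structure M]
    (r : M → M → Prop) : Prop :=
  ∃ (k : ℕ) (χ : L.Formula (Fin k ⊕ Fin 2)) (v : Fin k → M),
    ∀ a b : M, r a b ↔ χ.Realize (Sum.elim v ![a, b])

/-- The cofinality of a strict linear order `r` on `M`: the least cardinality of a subset of
`M` that is unbounded above with respect to `r`. -/
noncomputable def cofRel {M : Type u} (r : M → M → Prop) : Cardinal.{u} :=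
  sInf {c : Cardinal | ∃ S : Set M, (∀ b : M, ∃ y ∈ S, ¬ (r y b ∨ y = b)) ∧
    Cardinal.mk S = c}

section Helpers

open Cardinal

/-- Meeting `κ` many requirements with a finite-character notion of consistency. -/
lemma generic_aux {α I : Type u} (κ : Cardinal.{u}) (hI : #I ≤ κ) (C : Finset α → Prop)
    (h0 : C ∅) (D : I → Set α)
    (hD : ∀ S : Set α, #S < κ → (∀ F : Finset α, (F : Set α) ⊆ S → C F) → ∀ i, ∃ s ∈ D i,
      ∀ F : Finset α, (F : Set α) ⊆ insert s S → C F) :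
    ∃ S : Set α, (∀ F : Finset α, (F : Set α) ⊆ S → C F) ∧ ∀ i, ∃ s ∈ D i, s ∈ S := by
  classical
  rcases isEmpty_or_nonempty α with hα | hα
  · refine ⟨∅, fun F hF => ?_, fun i => ?_⟩
    · have : F = ∅ := Finset.eq_empty_of_isEmpty F
      rw [this]; exact h0
    · obtain ⟨s, -, -⟩ := hD ∅ (by
        simp only [mk_eq_zero]
        refine lt_of_lt_of_le ?_ hI
        exact pos_iff_ne_zero.2 (mk_ne_zero_iff.2 ⟨i⟩)) (fun F hF => by
          have : F = ∅ := Finset.eq_empty_of_isEmpty F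
          rw [this]; exact h0) i
      exact isEmptyElim s
  obtain ⟨r, wo, hr⟩ := exists_ord_eq I
  have hwf : WellFounded r := wo.wf
  let g : I → α := hwf.fix (fun i g =>
    Classical.epsilon fun s => s ∈ D i ∧
      ∀ F : Finset α, (F : Set α) ⊆ insert s {x | ∃ (j : I) (h : r j i), x = g j h} → C F)
  have hg : ∀ i, g i = Classical.epsilon fun s => s ∈ D i ∧
      ∀ F : Finset α, (F : Set α) ⊆ insert s {x | ∃ (j : I) (_ : r j i), x = g j} → C F := by
    intro i
    exact hwf.fix_eq _ i
  have hcov : ∀ (A : Set I) (F : Finset α), (F : Set α) ⊆ g '' A → F.Nonempty →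
      ∃ j ∈ A, (F : Set α) ⊆ insert (g j) {x | ∃ (k : I) (_ : r k j), x = g k} := by
    intro A F
    induction F using Finset.induction_on with
    | empty => intro _ h; exact absurd h (by simp)
    | insert a F _ ih =>
      intro hF _
      obtain ⟨j, hj, rfl⟩ := hF (Finset.mem_coe.2 (Finset.mem_insert_self a F))
      rcases F.eq_empty_or_nonempty with rfl | hne
      · exact ⟨j, hj, by simp⟩
      obtain ⟨k, hk, hkF⟩ := ih (fun x hx => hF (by simp at hx ⊢; exact Or.inr hx)) hne
      rcases trichotomous_of r j k with h | h | h
      · refine ⟨k, hk, ?_⟩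
        rw [Finset.coe_insert]
        exact Set.insert_subset (Or.inr ⟨j, h, rfl⟩) hkF
      · subst h
        refine ⟨j, hj, ?_⟩
        rw [Finset.coe_insert]
        exact Set.insert_subset (Or.inl rfl) hkF
      · refine ⟨j, hj, ?_⟩
        rw [Finset.coe_insert]
        refine Set.insert_subset (Or.inl rfl) (hkF.trans ?_)
        rintro x (rfl | ⟨l, hl, rfl⟩)
        · exact Or.inr ⟨k, h, rfl⟩
        · exact Or.inr ⟨l, _root_.trans hl h, rfl⟩
  have main : ∀ i, g i ∈ D i ∧
      ∀ F : Finset α, (F : Set α) ⊆ insert (g i) {x | ∃ (j : I) (_ : r j i), x = g j} → C F := by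
    intro i
    induction i using hwf.induction with
    | _ i ih =>
    have key : ∃ s, s ∈ D i ∧ ∀ F : Finset α,
        (F : Set α) ⊆ insert s {x | ∃ (j : I) (_ : r j i), x = g j} → C F := by
      have himg : {x | ∃ (j : I) (_ : r j i), x = g j} = g '' {j | r j i} := by
        ext x; simp [eq_comm]
      refine hD _ ?_ ?_ i
      · rw [himg]
        refine mk_image_le.trans_lt (lt_of_lt_of_le ?_ hI)
        have := card_typein_lt (r := r) i hr
        rwa [Ordinal.card_typein] at this
      · intro F hF
        rcases F.eq_empty_or_nonempty with rfl | hne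
        · exact h0
        rw [himg] at hF
        obtain ⟨j, hj, hjF⟩ := hcov _ F hF hne
        exact (ih j hj).2 F hjF
    have := Classical.epsilon_spec key
    rw [← hg i] at this
    exact this
  refine ⟨Set.range g, fun F hF => ?_, fun i => ⟨g i, (main i).1, i, rfl⟩⟩
  rcases F.eq_empty_or_nonempty with rfl | hne
  · exact h0
  obtain ⟨j, -, hjF⟩ := hcov Set.univ F (by simpa using hF) hne
  exact (main j).2 F hjF

lemma exists_support {L : FirstOrder.Language.{u, u}} {M : Type u} [L.Structure M] {α : Type u}
    (φ : L.Formula α) : ∃ s : Finset α, ∀ v v' : α → M, (∀ a ∈ s, v a = v' a) →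
      (φ.Realize v ↔ φ.Realize v') := by
  classical
  refine ⟨φ.freeVarFinset, fun v v' h => ?_⟩
  have h1 := BoundedFormula.realize_restrictFreeVar (φ := φ) (f := fun a => (a : α)) (v := v)
    (xs := default) v' (fun a => h a a.2)
  have h2 := BoundedFormula.realize_restrictFreeVar (φ := φ) (f := fun a => (a : α)) (v := v)
    (xs := default) v (fun a => rfl)
  exact h2.symm.trans h1

lemma definableRel_of {L : FirstOrder.Language.{u, u}} {M : Type u} [L.Structure M]
    (χ : L.Formula (M ⊕ Fin 2)) (r : M → M → Prop)
    (h : ∀ a b, r a b ↔ χ.Realize (Sum.elim id ![a, b])) : DefinableRel L M r := by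
  classical
  obtain ⟨s, hs⟩ := exists_support (M := M) χ
  let t : Finset M := s.preimage Sum.inl Sum.inl_injective.injOn
  let e := t.equivFin
  refine ⟨t.card, χ.relabel (Sum.elim (fun m => if hm : m ∈ t then Sum.inl (e ⟨m, hm⟩) else
    Sum.inr 0) Sum.inr), fun k => (e.symm k : M), fun a b => ?_⟩
  rw [h, Formula.realize_relabel]
  refine hs _ _ ?_
  rintro (m | j) hm
  · have : m ∈ t := by simpa [t] using hm
    simp [this]
  · simp

lemma formula_card {L : FirstOrder.Language.{u, u}} {α : Type u} {κ : Cardinal.{u}}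
    (hκ : ℵ₀ ≤ κ) (hα : #α ≤ κ) (hL : L.card ≤ κ) : #(L.Formula α) ≤ κ := by
  have h1 : #(L.Formula α) ≤ #(Σ n, L.BoundedFormula α n) :=
    mk_le_of_injective (f := fun φ => (⟨0, φ⟩ : Σ n, L.BoundedFormula α n))
      (fun a b h => by simpa using h)
  refine h1.trans (BoundedFormula.card_le.trans (max_le hκ ?_))
  simp only [lift_id]
  exact add_le_of_le hκ hα (by simpa using hL)

lemma finset_card_lt {α : Type u} {κ : Cardinal.{u}} (hκ : ℵ₀ ≤ κ) (hα : #α < κ) :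
    #(Finset α) < κ := by
  rcases finite_or_infinite α with h | h
  · exact (lt_aleph0_of_finite _).trans_le hκ
  · rwa [mk_finset_of_infinite]

variable {L : FirstOrder.Language.{u, u}} {M V : Type u} [L.Structure M]

/-- Finite consistency: `F` is satisfied in `M` with the variable `v0` arbitrarily large. -/
def FinCons (ltφ : M → M → Prop) (v0 : V) (F : Finset (L.Formula (M ⊕ V))) : Prop :=
  ∀ a, ∃ w : V → M, ltφ a (w v0) ∧ ∀ σ ∈ F, σ.Realize (Sum.elim id w)

/-- The Henkin witness formula. -/
noncomputable def henk (θ : L.Formula ((M ⊕ V) ⊕ Unit)) (i : V) : L.Formula (M ⊕ V) :=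
  (θ.iExs Unit).imp (θ.relabel (Sum.elim id (fun _ => Sum.inr i)))

lemma realize_henk {N : Type*} [L.Structure N] (θ : L.Formula ((M ⊕ V) ⊕ Unit)) (i : V)
    (v : M ⊕ V → N) :
    (henk θ i).Realize v ↔ ((∃ x : N, θ.Realize (Sum.elim v (fun _ => x))) →
      θ.Realize (Sum.elim v (fun _ => v (Sum.inr i)))) := by
  have e : v ∘ (Sum.elim id (fun _ : Unit => Sum.inr i)) =
      Sum.elim v (fun _ => v (Sum.inr i)) := by
    ext (x | x) <;> rfl
  rw [henk, Formula.realize_imp, Formula.realize_iExs, Formula.realize_relabel, e]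
  refine imp_congr_left ⟨?_, ?_⟩
  · rintro ⟨x, hx⟩; exact ⟨x (), hx⟩
  · rintro ⟨x, hx⟩; exact ⟨_, hx⟩

/-- Boundedness formula `x_i ≤_ψ a`. -/
noncomputable def bnd (ψ : L.Formula (M ⊕ Fin 2)) (i : V) (a : M) : L.Formula (M ⊕ V) :=
  ψ.relabel (Sum.elim Sum.inl ![Sum.inr i, Sum.inl a]) ⊔
    Term.equal (Term.var (Sum.inr i)) (Term.var (Sum.inl a))

lemma realize_bnd {N : Type*} [L.Structure N] (ψ : L.Formula (M ⊕ Fin 2)) (i : V) (a : M)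
    (v : M ⊕ V → N) :
    (bnd ψ i a).Realize v ↔ (ψ.Realize (Sum.elim (v ∘ Sum.inl) ![v (Sum.inr i), v (Sum.inl a)]) ∨
      v (Sum.inr i) = v (Sum.inl a)) := by
  have e : v ∘ (Sum.elim Sum.inl ![Sum.inr i, Sum.inl a]) =
      Sum.elim (v ∘ Sum.inl) ![v (Sum.inr i), v (Sum.inl a)] := by
    ext (x | x)
    · rfl
    · fin_cases x <;> rfl
  rw [bnd, Formula.realize_sup, Formula.realize_relabel, e, Formula.realize_equal]
  simp

lemma density_henk {κ : Cardinal.{u}} (hκ : κ.IsRegular) (hV : #V = κ) (ltφ : M → M → Prop)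
    (v0 : V) (S : Set (L.Formula (M ⊕ V))) (hS : #S < κ)
    (hc : ∀ F : Finset (L.Formula (M ⊕ V)), (F : Set _) ⊆ S → FinCons ltφ v0 F)
    (θ : L.Formula ((M ⊕ V) ⊕ Unit)) :
    ∃ i, ∀ F : Finset (L.Formula (M ⊕ V)), (F : Set _) ⊆ insert (henk θ i) S →
      FinCons ltφ v0 F := by
  classical
  choose supp hsupp using fun σ : L.Formula (M ⊕ V) => exists_support (M := M) σ
  obtain ⟨t, ht⟩ := exists_support (M := M) θ
  have hfin : ∀ s : Set V, s.Finite → #s < κ := fun s hs =>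
    (lt_aleph0_iff_set_finite.2 hs).trans_le hκ.aleph0_le
  have hU : #(⋃ σ : S, {v : V | Sum.inr v ∈ supp σ} : Set V) < κ := by
    refine (card_iUnion_lt_iff_forall_of_isRegular hκ hS).2 fun σ => hfin _ ?_
    exact (supp σ).finite_toSet.preimage Sum.inr_injective.injOn
  have hT : #({v : V | Sum.inl (Sum.inr v) ∈ t} ∪ {v0} : Set V) < κ := by
    refine hfin _ (Set.Finite.union ?_ (Set.finite_singleton _))
    exact t.finite_toSet.preimage (f := fun v : V => Sum.inl (Sum.inr v))
      (fun a _ b _ h => by simpa using h)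
  have hne : ((⋃ σ : S, {v : V | Sum.inr v ∈ supp σ}) ∪
      ({v : V | Sum.inl (Sum.inr v) ∈ t} ∪ {v0}) : Set V) ≠ Set.univ := by
    intro h
    have h1 := (mk_union_le (⋃ σ : S, {v : V | Sum.inr v ∈ supp σ})
      ({v : V | Sum.inl (Sum.inr v) ∈ t} ∪ {v0})).trans_lt (add_lt_of_lt hκ.aleph0_le hU hT)
    rw [h, mk_univ, hV] at h1
    exact lt_irrefl _ h1
  obtain ⟨i, hi⟩ := (Set.ne_univ_iff_exists_notMem _).1 hne
  simp only [Set.mem_union, Set.mem_iUnion, Set.mem_ofPred_eq, Set.mem_singleton_iff, not_or,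
    not_exists] at hi
  obtain ⟨hi1, hi2, hi3⟩ := hi
  refine ⟨i, fun F hF a => ?_⟩
  obtain ⟨w, hw0, hw⟩ := hc (F.erase (henk θ i)) (by
    intro σ hσ
    rw [Finset.mem_coe, Finset.mem_erase] at hσ
    exact (hF hσ.2).resolve_left hσ.1) a
  obtain ⟨x, hx⟩ : ∃ x : M, (∃ x : M, θ.Realize (Sum.elim (Sum.elim id w) (fun _ => x))) →
      θ.Realize (Sum.elim (Sum.elim id w) (fun _ => x)) := by
    by_cases h : ∃ x : M, θ.Realize (Sum.elim (Sum.elim id w) (fun _ => x))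
    · exact ⟨h.choose, fun _ => h.choose_spec⟩
    · exact ⟨w i, fun h' => absurd h' h⟩
  have hθ : ∀ y : M, θ.Realize (Sum.elim (Sum.elim id (Function.update w i x)) (fun _ => y)) ↔
      θ.Realize (Sum.elim (Sum.elim id w) (fun _ => y)) := by
    intro y
    refine ht _ _ ?_
    rintro ((m | v) | u) hv
    · rfl
    · have : v ≠ i := by rintro rfl; exact hi2 hv
      exact Function.update_of_ne this x w
    · rfl
  refine ⟨Function.update w i x, ?_, fun σ hσ => ?_⟩
  · rw [Function.update_of_ne (Ne.symm hi3)]; exact hw0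
  by_cases hσ' : σ = henk θ i
  · subst hσ'
    rw [realize_henk]
    have e : (Sum.elim id (Function.update w i x) : M ⊕ V → M) (Sum.inr i) = x := by
      simp only [Sum.elim_inr, Function.update_self]
    rintro ⟨y, hy⟩
    rw [e]
    exact (hθ x).2 (hx ⟨y, (hθ y).1 hy⟩)
  · have hσS : σ ∈ S := (hF hσ).resolve_left hσ'
    refine (hsupp σ _ _ ?_).1 (hw σ (Finset.mem_erase.2 ⟨hσ', hσ⟩))
    rintro (m | v) hv
    · rfl
    · have : v ≠ i := by rintro rfl; exact hi1 ⟨σ, hσS⟩ hv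
      exact (Function.update_of_ne this x w).symm

lemma definable_G (F : Finset (L.Formula (M ⊕ V))) (v0 i : V) (ψ : L.Formula (M ⊕ Fin 2)) :
    DefinableRel L M (fun x y => ∃ w : V → M, w v0 = x ∧
      (ψ.Realize (Sum.elim id ![w i, y]) ∨ w i = y) ∧ ∀ σ ∈ F, σ.Realize (Sum.elim id w)) := by
  classical
  choose supp hsupp using fun σ : L.Formula (M ⊕ V) => exists_support (M := M) σ
  let s : Finset V := {v0, i} ∪ F.biUnion fun σ => (supp σ).preimage Sum.inr Sum.inr_injective.injOn
  have h0 : v0 ∈ s := by simp [s]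
  have hi : i ∈ s := by simp [s]
  let ρ : M ⊕ V → (M ⊕ Fin 2) ⊕ s := Sum.elim (fun m => Sum.inl (Sum.inl m))
    (fun v => if hv : v ∈ s then Sum.inr ⟨v, hv⟩ else Sum.inl (Sum.inr 0))
  let χ : L.Formula ((M ⊕ Fin 2) ⊕ s) :=
    Term.equal (Term.var (Sum.inr ⟨v0, h0⟩)) (Term.var (Sum.inl (Sum.inr 0))) ⊓
    ((ψ.relabel (Sum.elim (fun m => Sum.inl (Sum.inl m))
        ![Sum.inr ⟨i, hi⟩, Sum.inl (Sum.inr 1)]) ⊔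
      Term.equal (Term.var (Sum.inr ⟨i, hi⟩)) (Term.var (Sum.inl (Sum.inr 1)))) ⊓
    Formula.iInf (fun σ : F => (σ : L.Formula (M ⊕ V)).relabel ρ))
  have hχ : ∀ (a b : M) (u : s → M), χ.Realize (Sum.elim (Sum.elim id ![a, b]) u) ↔
      (u ⟨v0, h0⟩ = a ∧ (ψ.Realize (Sum.elim id ![u ⟨i, hi⟩, b]) ∨ u ⟨i, hi⟩ = b) ∧
        ∀ σ ∈ F, σ.Realize (Sum.elim (Sum.elim id ![a, b]) u ∘ ρ)) := by
    intro a b u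
    have e : (Sum.elim (Sum.elim id ![a, b]) u) ∘ (Sum.elim (fun m => Sum.inl (Sum.inl m))
        ![Sum.inr ⟨i, hi⟩, Sum.inl (Sum.inr 1)]) = Sum.elim id ![u ⟨i, hi⟩, b] := by
      ext (x | x)
      · rfl
      · fin_cases x <;> rfl
    simp only [χ, Formula.realize_inf, Formula.realize_sup, Formula.realize_relabel, e,
      Formula.realize_equal, Formula.realize_iInf]
    simp
  have hρ : ∀ (a b : M) (u : s → M) (w : V → M), (∀ v : s, w v = u v) → ∀ σ ∈ F,
      (σ.Realize (Sum.elim (Sum.elim id ![a, b]) u ∘ ρ) ↔ σ.Realize (Sum.elim id w)) := by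
    intro a b u w huw σ hσ
    refine hsupp σ _ _ ?_
    rintro (m | v) hv
    · rfl
    · have hvs : v ∈ s := by
        simp only [s, Finset.mem_union, Finset.mem_biUnion, Finset.mem_preimage]
        exact Or.inr ⟨σ, hσ, hv⟩
      simp [ρ, hvs, huw ⟨v, hvs⟩]
  refine definableRel_of (χ.iExs s) _ fun a b => ?_
  rw [Formula.realize_iExs]
  simp only [hχ]
  constructor
  · rintro ⟨w, h1, h2, h3⟩
    exact ⟨fun v => w v, h1, h2, fun σ hσ => (hρ a b _ w (fun _ => rfl) σ hσ).2 (h3 σ hσ)⟩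
  · rintro ⟨u, h1, h2, h3⟩
    refine ⟨fun v => if hv : v ∈ s then u ⟨v, hv⟩ else a, ?_, ?_, fun σ hσ => ?_⟩
    · simpa [h0] using h1
    · simpa [hi] using h2
    · exact (hρ a b u _ (fun v => by simp) σ hσ).1 (h3 σ hσ)

lemma density_bnd {κ : Cardinal.{u}} (hκ : ℵ₀ ≤ κ) (ltφ : M → M → Prop)
    (hφlin : IsStrictTotalOrder M ltφ) (hφnomax : ∀ a : M, ∃ b : M, ltφ a b)
    (v0 : V) (S : Set (L.Formula (M ⊕ V))) (hS : #S < κ)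
    (hc : ∀ F : Finset (L.Formula (M ⊕ V)), (F : Set _) ⊆ S → FinCons ltφ v0 F)
    (ψ : L.Formula (M ⊕ Fin 2)) (ltψ : M → M → Prop)
    (hψ : ∀ a b, ltψ a b ↔ ψ.Realize (Sum.elim id ![a, b]))
    (hψlin : IsStrictTotalOrder M ltψ) (hcof : cofRel ltψ = κ)
    (hG : ∀ G : M → M → Prop, DefinableRel L M G → ¬ IsConnectionRel ltφ ltψ G) (i : V) :
    ∃ a, ∀ F : Finset (L.Formula (M ⊕ V)), (F : Set _) ⊆ insert (bnd ψ i a) S →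
      FinCons ltφ v0 F := by
  classical
  by_contra! hcon
  have hnomax : ∀ b, ∃ y, ltψ b y := by
    have hne : {c : Cardinal | ∃ S : Set M, (∀ b : M, ∃ y ∈ S, ¬ (ltψ y b ∨ y = b)) ∧
        Cardinal.mk S = c}.Nonempty := by
      by_contra h
      rw [Set.not_nonempty_iff_eq_empty] at h
      rw [cofRel, h, Cardinal.sInf_empty] at hcof
      rw [← hcof] at hκ
      exact absurd hκ (not_le.2 aleph0_pos)
    obtain ⟨c, T, hT, -⟩ := hne
    intro b
    obtain ⟨y, -, hy⟩ := hT b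
    rcases trichotomous_of ltψ b y with h | h | h
    · exact ⟨y, h⟩
    · exact absurd (Or.inr h.symm) hy
    · exact absurd (Or.inl h) hy
  have hF : ∀ a, ∃ F : Finset S, ∃ b, ∀ w : V → M, ltφ b (w v0) →
      (∀ σ ∈ F, (σ : L.Formula (M ⊕ V)).Realize (Sum.elim id w)) →
      ¬ (ltψ (w i) a ∨ w i = a) := by
    intro a
    obtain ⟨F, hFS, hFc⟩ := hcon a
    simp only [FinCons, not_forall] at hFc
    obtain ⟨b, hb⟩ := hFc
    refine ⟨F.subtype (· ∈ S), b, fun w hw hwF hle => hb ⟨w, hw, fun σ hσ => ?_⟩⟩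
    rcases hFS hσ with h | h
    · rw [h, realize_bnd]
      rw [hψ] at hle
      simpa using hle
    · exact hwF ⟨σ, h⟩ (by simpa using hσ)
  choose F b hFb using hF
  have hunb : ∃ F0 : Finset S, ∀ y, ∃ a, F a = F0 ∧ ltψ y a := by
    by_contra! hno
    choose B hB using hno
    have hle : cofRel ltψ ≤ #(Set.range B) := by
      refine csInf_le' ⟨Set.range B, fun c => ?_, rfl⟩
      obtain ⟨c', hc'⟩ := hnomax c
      refine ⟨B (F c'), ⟨_, rfl⟩, ?_⟩
      have h1 := hB (F c') c' rfl
      rintro (h | h)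
      · exact h1 (_root_.trans h hc')
      · exact h1 (h ▸ hc')
    have hlt := mk_range_le.trans_lt (finset_card_lt hκ hS) |>.trans_le' hle
    rw [hcof] at hlt
    exact lt_irrefl _ hlt
  obtain ⟨F0, hF0⟩ := hunb
  refine hG _ (definable_G (F0.map (Function.Embedding.subtype _)) v0 i ψ) ⟨?_, ?_⟩
  · intro x0
    obtain ⟨w, hw0, hw⟩ := hc (F0.map (Function.Embedding.subtype _)) (by
      intro σ hσ
      simp at hσ
      exact hσ.1) x0
    refine ⟨w v0, Or.inl hw0, w i, fun y hy => ⟨w, rfl, ?_, hw⟩⟩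
    rwa [← hψ]
  · intro y0
    obtain ⟨a, rfl, hya⟩ := hF0 y0
    obtain ⟨x0, hx0⟩ := hφnomax (b a)
    refine ⟨a, Or.inl hya, x0, ?_⟩
    rintro x hx ⟨w, rfl, h2, h3⟩
    rw [← hψ] at h2
    refine hFb a w ?_ (fun σ hσ => h3 σ (by simpa using hσ)) h2
    rcases hx with h | h
    · exact _root_.trans hx0 h
    · rwa [← h]

end Helpers

/-- Corollary 3.2: if `κ` is regular, `|M|, |L| ≤ κ`, and `<_φ` is a definable linear
ordering of `M` without greatest element (defined by the formula `φfml` with parameters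
`vφ`), then `M` has a proper elementary extension `N` such that (1) `M` is not
`<_φ`-cofinal in `N`, and (2) `M` is `<_ψ`-cofinal in `N` for every definable linear
ordering `<_ψ` of `M` of cofinality `κ` that is not definably connected to `<_φ`. -/
theorem exists_elementary_extension {L : FirstOrder.Language.{u, u}} {M : Type u}
    [Nonempty M] [L.Structure M] (κ : Cardinal.{u}) (hκ : κ.IsRegular)
    (hM : Cardinal.mk M ≤ κ) (hL : L.card ≤ κ)
    (kφ : ℕ) (φfml : L.Formula (Fin kφ ⊕ Fin 2)) (vφ : Fin kφ → M)
    (ltφ : M → M → Prop)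
    (hφdef : ∀ a b : M, ltφ a b ↔ φfml.Realize (Sum.elim vφ ![a, b]))
    (hφlin : IsStrictTotalOrder M ltφ)
    (hφnomax : ∀ a : M, ∃ b : M, ltφ a b) :
    ∃ (N : Type u) (_ : L.Structure N) (f : M ↪ₑ[L] N),
      ¬ Function.Surjective (f : M → N) ∧
      -- (1) M is not <_φ-cofinal in N:
      (∃ b : N, ∀ a : M, φfml.Realize (Sum.elim (fun i => f (vφ i)) ![f a, b])) ∧
      -- (2) M is <_ψ-cofinal in N, for every definable linear ordering <_ψ of M of
      -- cofinality κ that is not definably connected to <_φ: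
      (∀ (kψ : ℕ) (ψfml : L.Formula (Fin kψ ⊕ Fin 2)) (vψ : Fin kψ → M)
        (ltψ : M → M → Prop),
        (∀ a b : M, ltψ a b ↔ ψfml.Realize (Sum.elim vψ ![a, b])) →
        IsStrictTotalOrder M ltψ →
        cofRel ltψ = κ →
        (∀ G : M → M → Prop, DefinableRel L M G → ¬ IsConnectionRel ltφ ltψ G) →
        ∀ b : N, ∃ a : M,
          ψfml.Realize (Sum.elim (fun i => f (vψ i)) ![b, f a]) ∨ b = f a) := by
  classical
  obtain ⟨V, hV⟩ : ∃ V : Type u, Cardinal.mk V = κ := ⟨κ.out, κ.mk_out⟩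
  have hκ0 : Cardinal.aleph0 ≤ κ := hκ.aleph0_le
  have hVne : Nonempty V := by
    rw [← Cardinal.mk_ne_zero_iff, hV]
    exact (Cardinal.aleph0_pos.trans_le hκ0).ne'
  obtain ⟨v0⟩ := hVne
  -- requirement indices
  let Good : L.Formula (M ⊕ Fin 2) → Prop := fun ψ => ∃ ltψ : M → M → Prop,
    (∀ a b, ltψ a b ↔ ψ.Realize (Sum.elim id ![a, b])) ∧ IsStrictTotalOrder M ltψ ∧
      cofRel ltψ = κ ∧ ∀ G : M → M → Prop, DefinableRel L M G → ¬ IsConnectionRel ltφ ltψ G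
  let I := L.Formula ((M ⊕ V) ⊕ Unit) ⊕ ({ψ : L.Formula (M ⊕ Fin 2) // Good ψ} × V)
  let D : I → Set (L.Formula (M ⊕ V)) := Sum.elim (fun θ => Set.range (henk θ))
    (fun p => Set.range (bnd p.1.1 p.2))
  have hsum : ∀ {A B : Type u}, Cardinal.mk A ≤ κ → Cardinal.mk B ≤ κ →
      Cardinal.mk (A ⊕ B) ≤ κ := by
    intro A B hA hB
    rw [Cardinal.mk_sum, Cardinal.lift_id, Cardinal.lift_id]
    exact Cardinal.add_le_of_le hκ0 hA hB
  have hfinle : ∀ (A : Type) [Finite A], Cardinal.mk (M ⊕ A) ≤ κ := by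
    intro A _
    rw [Cardinal.mk_sum, Cardinal.lift_id']
    refine Cardinal.add_le_of_le hκ0 (by simpa using hM) (le_trans ?_ hκ0)
    rw [Cardinal.lift_le_aleph0]
    exact (Cardinal.lt_aleph0_of_finite A).le
  have hMV : Cardinal.mk (M ⊕ V) ≤ κ := hsum hM hV.le
  have hI : Cardinal.mk I ≤ κ := by
    refine hsum (formula_card hκ0 ?_ hL) ?_
    · rw [Cardinal.mk_sum, Cardinal.lift_id']
      refine Cardinal.add_le_of_le hκ0 (by simpa using hMV) (le_trans ?_ hκ0)
      simp
    · rw [Cardinal.mk_prod, Cardinal.lift_id, Cardinal.lift_id]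
      refine Cardinal.mul_le_of_le hκ0 ?_ hV.le
      exact (Cardinal.mk_subtype_le _).trans (formula_card hκ0 (hfinle (Fin 2)) hL)
  obtain ⟨S, hS, hSD⟩ := generic_aux κ hI (FinCons ltφ v0) (by
      intro a
      obtain ⟨b, hb⟩ := hφnomax a
      exact ⟨fun _ => b, hb, by simp⟩) D (by
      intro S hSκ hSc i
      rcases i with θ | ⟨⟨ψ, ltψ, h1, h2, h3, h4⟩, i⟩
      · obtain ⟨i, hi⟩ := density_henk hκ hV ltφ v0 S hSκ hSc θ
        exact ⟨_, ⟨i, rfl⟩, hi⟩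
      · obtain ⟨a, ha⟩ := density_bnd hκ0 ltφ hφlin hφnomax v0 S hSκ hSc ψ ltψ h1 h2 h3 h4 i
        exact ⟨_, ⟨a, rfl⟩, ha⟩)
  have hhenk : ∀ θ, ∃ i, henk θ i ∈ S := by
    intro θ
    obtain ⟨_, ⟨i, rfl⟩, hi⟩ := hSD (Sum.inl θ)
    exact ⟨i, hi⟩
  have hbnd : ∀ ψ, Good ψ → ∀ i, ∃ a, bnd ψ i a ∈ S := by
    intro ψ hψ i
    obtain ⟨_, ⟨a, rfl⟩, ha⟩ := hSD (Sum.inr (⟨ψ, hψ⟩, i))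
    exact ⟨a, ha⟩
  -- the ultrapower
  letI : LinearOrder M := linearOrderOfSTO ltφ
  let J := Finset S × M
  have hw : ∀ j : J, ∃ w : V → M, ltφ j.2 (w v0) ∧
      ∀ σ ∈ j.1, (σ : L.Formula (M ⊕ V)).Realize (Sum.elim id w) := by
    intro j
    obtain ⟨w, h1, h2⟩ := hS (j.1.map (Function.Embedding.subtype _)) (by
      intro σ hσ
      simp at hσ
      exact hσ.1) j.2
    exact ⟨w, h1, fun σ hσ => h2 σ (by simpa using hσ)⟩
  choose w hw0 hwS using hw
  let U : Ultrafilter J := Ultrafilter.of Filter.atTop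
  have hU : ∀ j0 : J, ∀ᶠ j in (U : Filter J), j0 ≤ j := fun j0 =>
    Ultrafilter.of_le Filter.atTop (Filter.eventually_ge_atTop j0)
  let P := (U : Filter J).Product (fun _ => M)
  let pre : M ⊕ V → J → M := fun p j => Sum.elim id (w j) p
  let val : M ⊕ V → P := fun p => ((pre p : J → M) : P)
  have los : ∀ {β : Type u} (σ : L.Formula β) (x : β → M ⊕ V),
      σ.Realize (val ∘ x) ↔ ∀ᶠ j in (U : Filter J), σ.Realize (Sum.elim id (w j) ∘ x) :=
    fun σ x => Ultraproduct.realize_formula_cast (M := fun _ : J => M) σ (fun b => pre (x b))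
  have los0 : ∀ {β : Type} (σ : L.Formula β) (x : β → M ⊕ V),
      σ.Realize (val ∘ x) ↔ ∀ᶠ j in (U : Filter J), σ.Realize (Sum.elim id (w j) ∘ x) :=
    fun σ x => Ultraproduct.realize_formula_cast (M := fun _ : J => M) σ (fun b => pre (x b))
  have hval : ∀ σ ∈ S, σ.Realize val := by
    intro σ hσ
    refine (los σ id).2 ?_
    filter_upwards [hU ({⟨σ, hσ⟩}, Classical.arbitrary M)] with j hj
    exact hwS j ⟨σ, hσ⟩ (hj.1 (by simp))
  have hwit : ∀ θ : L.Formula ((M ⊕ V) ⊕ Unit), (∃ x : P, θ.Realize (Sum.elim val fun _ => x)) →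
      ∃ i, θ.Realize (Sum.elim val fun _ => val (Sum.inr i)) := by
    intro θ hx
    obtain ⟨i, hi⟩ := hhenk θ
    exact ⟨i, (realize_henk θ i val).1 (hval _ hi) hx⟩
  let T : L.Substructure P :=
    { carrier := Set.range val
      fun_mem := by
        intro n f xs hxs
        choose p hp using hxs
        let θ : L.Formula ((M ⊕ V) ⊕ Unit) := Term.equal (Term.var (Sum.inr ()))
          (Term.func f fun k => Term.var (Sum.inl (p k)))
        have hθ : ∀ x : P, θ.Realize (Sum.elim val fun _ => x) ↔ x = Structure.funMap f xs := by
          intro x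
          simp only [θ, Formula.realize_equal, Term.realize, Sum.elim_inl, Sum.elim_inr, hp]
        obtain ⟨i, hi⟩ := hwit θ ⟨_, (hθ _).2 rfl⟩
        exact ⟨Sum.inr i, (hθ _).1 hi⟩ }
  let E : L.ElementarySubstructure P := T.toElementarySubstructure (by
    intro n φ x a hφ
    choose p hp using fun k => (x k).2
    let θ : L.Formula ((M ⊕ V) ⊕ Unit) := φ.toFormula.relabel
      (Sum.elim Empty.elim (Fin.snoc (α := fun _ => (M ⊕ V) ⊕ Unit) (fun k => Sum.inl (p k))
        (Sum.inr ())))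
    have hθ : ∀ y : P, θ.Realize (Sum.elim val fun _ => y) ↔
        φ.Realize default (Fin.snoc ((↑) ∘ x) y : _ → P) := by
      intro y
      rw [Formula.realize_relabel, BoundedFormula.realize_toFormula]
      have e1 : ((Sum.elim val fun _ => y) ∘ (Sum.elim Empty.elim
          (Fin.snoc (α := fun _ => (M ⊕ V) ⊕ Unit) (fun k => Sum.inl (p k))
          (Sum.inr ())))) ∘ Sum.inr = (Fin.snoc ((↑) ∘ x) y : _ → P) := by
        ext k
        refine Fin.lastCases ?_ (fun k => ?_) k
        · simp
        · simp [hp]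
      rw [e1, iff_eq_eq]
      congr 1
      exact Subsingleton.elim _ _
    obtain ⟨i, hi⟩ := hwit θ ⟨a, (hθ a).2 hφ⟩
    exact ⟨⟨val (Sum.inr i), ⟨_, rfl⟩⟩, (hθ _).1 hi⟩)
  let c : M ⊕ V → E := fun p => ⟨val p, ⟨p, rfl⟩⟩
  have hE : ∀ {β : Type} (σ : L.Formula β) (x : β → E),
      σ.Realize x ↔ σ.Realize (fun b => (x b : P)) := by
    intro β σ x
    exact (E.subtype.map_formula σ x).symm
  have hconst : ∀ {β : Type} (σ : L.Formula β) (x : β → M),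
      σ.Realize (fun b => c (Sum.inl (x b))) ↔ σ.Realize x := by
    intro β σ x
    rw [hE]
    refine (los0 σ (fun b => Sum.inl (x b))).trans ?_
    exact Filter.eventually_const (f := (U : Filter J)) (p := σ.Realize x)
  let f : M ↪ₑ[L] E := ⟨fun m => c (Sum.inl m), fun n σ x => hconst σ x⟩
  have hbig : ∃ b : E, ∀ a : M, φfml.Realize (Sum.elim (fun i => f (vφ i)) ![f a, b]) := by
    refine ⟨c (Sum.inr v0), fun a => ?_⟩
    rw [hE]
    let x : Fin kφ ⊕ Fin 2 → M ⊕ V := Sum.elim (fun k => Sum.inl (vφ k))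
      ![Sum.inl a, Sum.inr v0]
    have e : (fun b => ((Sum.elim (fun i => f (vφ i)) ![f a, c (Sum.inr v0)] b : E) : P)) =
        val ∘ x := by
      ext (k | k)
      · rfl
      · fin_cases k <;> rfl
    rw [e, los0]
    filter_upwards [hU (∅, a)] with j hj
    have e2 : Sum.elim id (w j) ∘ x = Sum.elim vφ ![a, w j v0] := by
      ext (k | k)
      · rfl
      · fin_cases k <;> rfl
    rw [e2, ← hφdef]
    exact lt_of_le_of_lt hj.2 (hw0 j)
  refine ⟨E, inferInstance, f, ?_, hbig, ?_⟩
  · intro hsurj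
    obtain ⟨b, hb⟩ := hbig
    obtain ⟨m, rfl⟩ := hsurj b
    have h := hb m
    have e : (Sum.elim (fun i => f (vφ i)) ![f m, f m] : Fin kφ ⊕ Fin 2 → E) =
        fun b => c (Sum.inl (Sum.elim vφ ![m, m] b)) := by
      ext (k | k)
      · rfl
      · fin_cases k <;> rfl
    rw [e, hconst, ← hφdef] at h
    exact irrefl_of ltφ m h
  · intro kψ ψfml vψ ltψ h1 h2 h3 h4 b
    obtain ⟨p | i, hp⟩ := b.2
    · exact ⟨p, Or.inr (Subtype.ext hp.symm)⟩
    let ψ : L.Formula (M ⊕ Fin 2) := ψfml.relabel (Sum.map vψ id)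
    have hψ : ∀ {N : Type u} [L.Structure N] (v : M → N) (y : Fin 2 → N),
        ψ.Realize (Sum.elim v y) ↔ ψfml.Realize (Sum.elim (fun k => v (vψ k)) y) := by
      intro N _ v y
      rw [Formula.realize_relabel, Sum.elim_comp_map]
      rfl
    obtain ⟨a, ha⟩ := hbnd ψ ⟨ltψ, fun a b => by rw [h1, hψ]; rfl, h2, h3, h4⟩ i
    refine ⟨a, ?_⟩
    have h := (realize_bnd ψ i a val).1 (hval _ ha)
    refine h.imp (fun h => ?_) (fun h => Subtype.ext (hp.symm.trans h))
    rw [hψ] at h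
    rw [hE]
    convert h using 1
    ext (k | k)
    · rfl
    · fin_cases k
      · exact hp.symm
      · rfl
end
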